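/- Let n ≥ 2, γ, δ ∈ ℂ and c_1,…,c_n, d_1,…,d_{n−1} ∈ ℂ with Re(γ) > 0, Re(δ) > 0, Re(c_j) > 0 for 1 ≤ j ≤ n and Re(d_j) > 0 for 1 ≤ j ≤ n−1; set d_0 = 0. Then, integrating each variable over the imaginary axis: (1/(4πi)^{n−1})·∫_{z_1,…,z_{n−1}} ∏_{j=1}^{n−1} Γ_ℝ(c_j+z_j)·Γ_ℝ(c_{j+1}+γ+z_j)·Γ_ℝ(d_{j−1}+δ−z_j)·Γ_ℝ(d_j−z_j) dz_1⋯dz_{n−1} = [Γ_ℝ(c_1+δ)·Γ_ℝ(c_n+d_{n−1}+γ) / (Γ_ℝ(c_1+γ)·Γ_ℝ(c_n+d_{n−1}+δ))] · (1/(4πi)^{n−1})·∫_{z_1,…,z_{n−1}} ∏_{j=1}^{n−1} Γ_ℝ(c_j+z_j)·Γ_ℝ(c_{j+1}+δ+z_j)·Γ_ℝ(d_{j−1}+γ−z_j)·Γ_ℝ(d_j−z_j) dz_1⋯dz_{n−1}. -/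

import Mathlib

open MeasureTheory Complex

noncomputable section

/-- `Γ_ℝ(s) = π^{-s/2} Γ(s/2)`. -/
def GammaR (s : ℂ) : ℂ := (Real.pi : ℂ) ^ (-s / 2) * Complex.Gamma (s / 2)

/-- Modified Bessel function of the second kind, via its integral representation. -/
def BesselK (ν : ℂ) (y : ℝ) : ℂ :=
  (1 / 2) * ∫ t in Set.Ioi (0 : ℝ),
    Complex.exp (-((y : ℂ) / 2) * ((t : ℂ) + 1 / (t : ℂ))) * (t : ℂ) ^ ν / (t : ℂ)

/-- Extend a finite real tuple to `ℕ`, defaulting to `1`. -/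
def extR {k : ℕ} (t : Fin k → ℝ) : ℕ → ℝ := fun i => if h : i < k then t ⟨i, h⟩ else 1

/-- Extend a finite real tuple to `ℕ`, defaulting to `0`. -/
def extR0 {k : ℕ} (t : Fin k → ℝ) : ℕ → ℝ := fun i => if h : i < k then t ⟨i, h⟩ else 0

/-- The positive orthant. -/
def posSet (k : ℕ) : Set (Fin k → ℝ) := {t | ∀ j, 0 < t j}

/-- `|a| = a_1 + ⋯ + a_n` (0-based indexing). -/
def sumA (n : ℕ) (a : ℕ → ℂ) : ℂ := ∑ j ∈ Finset.range n, a j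

/-- `ã_j = a_{j+1} + a_1/(n-1)` (0-based indexing). -/
def tildeA (n : ℕ) (a : ℕ → ℂ) : ℕ → ℂ := fun j => a (j + 1) + a 0 / ((n : ℂ) - 1)

/-- The normalized radial part `Ŵ^A_{n,a}` of the class one `GL_n(ℝ)` Whittaker function,
as a function of `(y_1,…,y_{n-1})` (0-based indexing). -/
def WhittAr : ℕ → (ℕ → ℂ) → (ℕ → ℝ) → ℂ
  | 0, _, _ => 1
  | 1, _, _ => 1
  | 2, a, y => 2 * ((y 0 : ℂ) ^ ((a 0 + a 1) / 2)) *
      BesselK ((a 0 - a 1) / 2) (2 * Real.pi * y 0)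
  | (n + 3), a, y =>
      ∫ t in posSet (n + 2),
        WhittAr (n + 2) (tildeA (n + 3) a)
            (fun j => y (j + 1) * Real.sqrt (extR t (j + 1) / extR t j)) *
          (∏ j ∈ Finset.range (n + 2),
            Complex.exp (((-(Real.pi * y j) ^ 2 * extR t j - 1 / extR t j : ℝ) : ℂ)) *
              ((Real.pi * y j : ℝ) : ℂ) ^ ((((n + 2 - j : ℕ) : ℂ) * a 0) / ((n + 2 : ℕ) : ℂ)) *
              ((extR t j : ℝ) : ℂ) ^ ((((n + 3 : ℕ) : ℂ) * a 0) / (2 * ((n + 2 : ℕ) : ℂ)))) *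
          ((Real.pi * extR t (n + 1) : ℝ) : ℂ) ^ (-(sumA (n + 3) a) / 2) *
          (∏ j ∈ Finset.range (n + 2), ((extR t j : ℝ) : ℂ))⁻¹

/-- `Ŵ^A_{n,a}` as a function of the full tuple `(y_1,…,y_n)`. -/
def WhittAhat (n : ℕ) (a : ℕ → ℂ) (y : ℕ → ℝ) : ℂ :=
  ((y (n - 1) : ℝ) : ℂ) ^ sumA n a * WhittAr n a y

/-- The Mellin transform `U_{n,a}` (0-based: `s j` stands for `s_{j+1}`). -/
def Ufun (n : ℕ) (a : ℕ → ℂ) (s : ℕ → ℂ) : ℂ :=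
  ∫ y in posSet (n - 1),
    WhittAr n a (extR y) *
      ∏ j ∈ Finset.range (n - 1), ((extR y j : ℝ) : ℂ) ^ s j / ((extR y j : ℝ) : ℂ)

/-- The normalized radial part `Ŵ^B_{n,b}` of the class one `SO_{2n+1}(ℝ)` Whittaker function. -/
def WhittBr : ℕ → (ℕ → ℂ) → (ℕ → ℝ) → ℂ
  | 0, _, _ => 1
  | 1, b, y => 2 * BesselK (b 0 / 2) (2 * Real.pi * y 0)
  | (n + 2), b, y =>
      ∫ p in (posSet (n + 2) ×ˢ posSet (n + 1)),
        WhittBr (n + 1) b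
            (fun j =>
              if j < n then
                y (j + 1) *
                  Real.sqrt (extR p.1 (j + 1) * extR p.2 (j + 1) /
                    (extR p.1 (j + 2) * extR p.2 j))
              else y (n + 1) * Real.sqrt (extR p.1 (n + 1) / extR p.2 n)) *
          (∏ j ∈ Finset.range (n + 2),
            Complex.exp (((-(Real.pi * y j) ^ 2 * extR p.1 j - 1 / extR p.1 j : ℝ) : ℂ)) *
              ((Real.pi * y j : ℝ) : ℂ) ^ b (n + 1)) *
          (∏ j ∈ Finset.range (n + 1),
            Complex.exp (((-(Real.pi * y j) ^ 2 * (extR p.1 j / extR p.1 (j + 1)) * extR p.2 j -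
                  1 / extR p.2 j : ℝ) : ℂ)) *
              ((extR p.1 (j + 1) * extR p.2 j : ℝ) : ℂ) ^ (b (n + 1) / 2)) *
          ((extR p.1 0 : ℝ) : ℂ) ^ b (n + 1) *
          (∏ j ∈ Finset.range (n + 1), ((extR p.2 j : ℝ) : ℂ))⁻¹ *
          (∏ j ∈ Finset.range (n + 2), ((extR p.1 j : ℝ) : ℂ))⁻¹

/-- The Mellin transform `V_{n,b}` (0-based: `s j` stands for `s_{j+1}`). -/
def Vfun (n : ℕ) (b : ℕ → ℂ) (s : ℕ → ℂ) : ℂ :=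
  ∫ y in posSet n,
    WhittBr n b (extR y) *
      ∏ j ∈ Finset.range n, ((extR y j : ℝ) : ℂ) ^ s j / ((extR y j : ℝ) : ℂ)

/-- Integral over the vertical line `Re z = c`, i.e. `i·∫_ℝ f(c+it) dt`. -/
def VInt (c : ℝ) (f : ℂ → ℂ) : ℂ := Complex.I * ∫ t : ℝ, f (c + t * Complex.I)

/-- Iterated integral over `k` vertical lines with abscissas `c 0, …, c (k-1)`;
the integrand is fed the contour points as a 0-based sequence. -/
def VIntK (k : ℕ) (c : ℕ → ℝ) (f : (ℕ → ℂ) → ℂ) : ℂ :=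
  Complex.I ^ k * ∫ t : Fin k → ℝ, f (fun i => (c i : ℂ) + (extR0 t i : ℝ) * Complex.I)

/-! ### Barnes' first lemma

The Fourier transform of `t ↦ σ(t)^u σ(-t)^v`, with `σ` the logistic function, is a Beta function,
so Parseval's formula evaluates the Barnes integral. -/

/-- The function `t ↦ σ(t)^u σ(-t)^v`, where `σ` is the logistic function. -/
def sigmoidKernel (u v : ℂ) (t : ℝ) : ℂ :=
  (Real.sigmoid t : ℂ) ^ u * (Real.sigmoid (-t) : ℂ) ^ v

lemma sigmoid_ne_zero (t : ℝ) : (Real.sigmoid t : ℂ) ≠ 0 :=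
  ofReal_ne_zero.2 (Real.sigmoid_pos t).ne'

lemma continuous_sigmoidKernel (u v : ℂ) : Continuous (sigmoidKernel u v) := by
  have h (w : ℂ) : Continuous fun t : ℝ => (Real.sigmoid t : ℂ) ^ w :=
    (continuous_ofReal.comp continuous_sigmoid).cpow continuous_const
      fun t => ofReal_mem_slitPlane.2 (Real.sigmoid_pos t)
  exact (h u).mul ((h v).comp continuous_neg)

lemma sigmoidKernel_mul_sigmoidKernel_neg (a b c d : ℂ) (t : ℝ) :
    sigmoidKernel a c t * sigmoidKernel b d (-t) = sigmoidKernel (a + d) (b + c) t := by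
  simp only [sigmoidKernel, neg_neg, cpow_add _ _ (sigmoid_ne_zero _)]
  ring

/-- Multiplying by a character shifts the exponents. -/
lemma exp_mul_sigmoidKernel (u v z : ℂ) (t : ℝ) :
    cexp (z * t) * sigmoidKernel u v t = sigmoidKernel (u + z) (v - z) t := by
  have h : Real.log (Real.sigmoid t) - Real.log (Real.sigmoid (-t)) = t := by
    rw [← Real.sigmoid_mul_rexp_neg, Real.log_mul (Real.sigmoid_pos t).ne' (Real.exp_ne_zero _),
      Real.log_exp]
    ring
  have h' : (Real.log (Real.sigmoid t) : ℂ) - Real.log (Real.sigmoid (-t)) = t := by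
    exact_mod_cast h
  simp only [sigmoidKernel, cpow_def_of_ne_zero (sigmoid_ne_zero _), ← ofReal_log
    (Real.sigmoid_nonneg _), ← Complex.exp_add]
  rw [← h']
  ring_nf

lemma abs_deriv_sigmoid_smul_beta (u v : ℂ) (t : ℝ) :
    |Real.sigmoid t * (1 - Real.sigmoid t)| •
      ((Real.sigmoid t : ℂ) ^ (u - 1) * (1 - (Real.sigmoid t : ℂ)) ^ (v - 1)) =
      sigmoidKernel u v t := by
  have h : 1 - (Real.sigmoid t : ℂ) = (Real.sigmoid (-t) : ℂ) := by
    rw [Real.sigmoid_neg]; push_cast; rfl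
  rw [← Real.sigmoid_neg, abs_of_pos (mul_pos (Real.sigmoid_pos _) (Real.sigmoid_pos _)), h,
    sigmoidKernel, cpow_sub _ _ (sigmoid_ne_zero _), cpow_sub _ _ (sigmoid_ne_zero _), cpow_one,
    cpow_one, real_smul]
  have := sigmoid_ne_zero t
  have := sigmoid_ne_zero (-t)
  push_cast
  field_simp

lemma integrable_sigmoidKernel {u v : ℂ} (hu : 0 < u.re) (hv : 0 < v.re) :
    Integrable (sigmoidKernel u v) := by
  have h := (intervalIntegrable_iff_integrableOn_Ioo_of_le zero_le_one).1
    (betaIntegral_convergent hu hv)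
  rw [← Real.range_sigmoid, ← Set.image_univ,
    integrableOn_image_iff_integrableOn_abs_deriv_smul MeasurableSet.univ
      (fun t _ => (Real.hasDerivAt_sigmoid t).hasDerivWithinAt) Real.sigmoid_injective.injOn,
    integrableOn_univ] at h
  simpa only [abs_deriv_sigmoid_smul_beta] using h

lemma integral_sigmoidKernel (u v : ℂ) : ∫ t, sigmoidKernel u v t = betaIntegral u v := by
  rw [betaIntegral, intervalIntegral.integral_of_le zero_le_one, integral_Ioc_eq_integral_Ioo,
    ← Real.range_sigmoid, ← Set.image_univ,
    integral_image_eq_integral_abs_deriv_smul MeasurableSet.univ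
      (fun t _ => (Real.hasDerivAt_sigmoid t).hasDerivWithinAt) Real.sigmoid_injective.injOn,
    setIntegral_univ]
  simp only [abs_deriv_sigmoid_smul_beta]

open FourierTransform in
lemma fourier_sigmoidKernel (u v : ℂ) (ξ : ℝ) :
    𝓕 (sigmoidKernel u v) ξ =
      betaIntegral (u - 2 * Real.pi * ξ * I) (v + 2 * Real.pi * ξ * I) := by
  rw [Real.fourier_real_eq_integral_exp_smul, ← integral_sigmoidKernel]
  congr 1 with t
  rw [smul_eq_mul, sub_eq_add_neg u, ← sub_neg_eq_add v, ← exp_mul_sigmoidKernel]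
  push_cast
  ring_nf

lemma norm_Gamma_le_Gamma_re {s : ℂ} (hs : 0 < s.re) : ‖Gamma s‖ ≤ Real.Gamma s.re := by
  rw [Gamma_eq_integral hs, Real.Gamma_eq_integral hs, GammaIntegral]
  refine (norm_integral_le_integral_norm _).trans (setIntegral_congr_fun measurableSet_Ioi ?_).le
  intro x hx
  simp [norm_cpow_eq_rpow_re_of_pos hx, norm_exp]

lemma norm_Gamma_le_div_norm {s : ℂ} (hs : 0 < s.re) :
    ‖Gamma s‖ ≤ Real.Gamma (s.re + 1) / ‖s‖ := by
  have h0 : s ≠ 0 := by rintro rfl; simp at hs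
  have h := norm_Gamma_le_Gamma_re (s := s + 1) (by simp; linarith)
  rw [Gamma_add_one s h0, norm_mul] at h
  rw [le_div_iff₀' (norm_pos_iff.2 h0)]
  simpa using h

lemma integrable_inv_norm_vertical_sq {u : ℂ} (hu : 0 < u.re) {k : ℝ} (hk : k ≠ 0) :
    Integrable fun ξ : ℝ => (‖u + k * ξ * I‖ ^ 2)⁻¹ := by
  have h := ((integrable_inv_one_add_sq.comp_div hu.ne').comp_add_left u.im).comp_mul_left' hk
  convert h.const_mul (u.re ^ 2)⁻¹ using 2 with ξ
  rw [← mul_inv, ← normSq_eq_norm_sq, normSq_apply]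
  congr 1
  simp
  field_simp

lemma integrable_betaIntegral_vertical {u v : ℂ} (hu : 0 < u.re) (hv : 0 < v.re) :
    Integrable fun ξ : ℝ =>
      betaIntegral (u - 2 * Real.pi * ξ * I) (v + 2 * Real.pi * ξ * I) := by
  have hk : 2 * Real.pi ≠ 0 := by positivity
  set C := Real.Gamma (u.re + 1) * Real.Gamma (v.re + 1) / ‖Gamma (u + v)‖ with hC
  have hC0 : 0 ≤ C := by
    have := Real.Gamma_pos_of_pos (s := u.re + 1) (by linarith)
    have := Real.Gamma_pos_of_pos (s := v.re + 1) (by linarith)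
    positivity
  refine (((integrable_inv_norm_vertical_sq hu (neg_ne_zero.2 hk)).add
    (integrable_inv_norm_vertical_sq hv hk)).const_mul C).mono' ?_ (.of_forall fun ξ => ?_)
  · simp only [← fourier_sigmoidKernel]
    exact (VectorFourier.fourierIntegral_continuous Real.continuous_fourierChar
      (L := innerₗ ℝ) continuous_inner (integrable_sigmoidKernel hu hv)).aestronglyMeasurable
  · have e1 : u - 2 * Real.pi * ξ * I = u + (-(2 * Real.pi) : ℝ) * ξ * I := by push_cast; ring
    have e2 : v + 2 * Real.pi * ξ * I = v + (2 * Real.pi : ℝ) * ξ * I := by push_cast; ring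
    rw [e1, e2, Pi.add_apply]
    set s := u + (-(2 * Real.pi) : ℝ) * ξ * I with hs
    set w := v + (2 * Real.pi : ℝ) * ξ * I with hw
    have hsr : s.re = u.re := by simp [hs]
    have hwr : w.re = v.re := by simp [hw]
    have hsw : s + w = u + v := by rw [hs, hw]; push_cast; ring
    have h0 : Gamma (u + v) ≠ 0 := Gamma_ne_zero_of_re_pos (by rw [add_re]; positivity)
    have hB := Gamma_mul_Gamma_eq_betaIntegral (hsr ▸ hu) (hwr ▸ hv)
    rw [hsw] at hB
    rw [eq_div_of_mul_eq h0 ((mul_comm _ _).trans hB.symm), norm_div, norm_mul]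
    have b1 := norm_Gamma_le_div_norm (hsr ▸ hu : 0 < s.re)
    have b2 := norm_Gamma_le_div_norm (hwr ▸ hv : 0 < w.re)
    rw [hsr] at b1
    rw [hwr] at b2
    calc ‖Gamma s‖ * ‖Gamma w‖ / ‖Gamma (u + v)‖
        ≤ Real.Gamma (u.re + 1) / ‖s‖ * (Real.Gamma (v.re + 1) / ‖w‖) / ‖Gamma (u + v)‖ := by
          gcongr
      _ = C * (‖s‖⁻¹ * ‖w‖⁻¹) := by rw [hC]; ring
      _ ≤ C * ((‖s‖ ^ 2)⁻¹ + (‖w‖ ^ 2)⁻¹) := by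
          gcongr
          rw [← inv_pow, ← inv_pow]
          nlinarith [sq_nonneg (‖s‖⁻¹ - ‖w‖⁻¹), sq_nonneg ‖s‖⁻¹, sq_nonneg ‖w‖⁻¹]

open FourierTransform in
/-- Barnes' first lemma, in terms of Beta functions. -/
lemma integral_betaIntegral_mul_betaIntegral {a b c d : ℂ}
    (ha : 0 < a.re) (hb : 0 < b.re) (hc : 0 < c.re) (hd : 0 < d.re) :
    ∫ ξ : ℝ, betaIntegral (a - 2 * Real.pi * ξ * I) (c + 2 * Real.pi * ξ * I) *
      betaIntegral (b - 2 * Real.pi * ξ * I) (d + 2 * Real.pi * ξ * I) =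
      betaIntegral (a + d) (b + c) := by
  have hg : Integrable (𝓕 (sigmoidKernel b d)) := by
    simpa only [← fourier_sigmoidKernel] using! integrable_betaIntegral_vertical hb hd
  have hinv (t : ℝ) : 𝓕 (𝓕 (sigmoidKernel b d)) t = sigmoidKernel b d (-t) := by
    rw [← (continuous_sigmoidKernel b d).fourierInv_fourier_eq (integrable_sigmoidKernel hb hd) hg,
      Real.fourierInv_eq_fourier_neg, neg_neg,
      (continuous_sigmoidKernel b d).fourierInv_fourier_eq (integrable_sigmoidKernel hb hd) hg]
  have hself : ∫ ξ, 𝓕 (sigmoidKernel a c) ξ * 𝓕 (sigmoidKernel b d) ξ =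
      ∫ t, sigmoidKernel a c t * 𝓕 (𝓕 (sigmoidKernel b d)) t := by
    simpa using! VectorFourier.integral_fourierIntegral_smul_eq_flip (L := innerₗ ℝ)
      Real.continuous_fourierChar continuous_inner (integrable_sigmoidKernel ha hc) hg
  simp only [← fourier_sigmoidKernel]
  rw [hself, ← integral_sigmoidKernel]
  simp only [hinv, sigmoidKernel_mul_sigmoidKernel_neg]

lemma GammaR_ne_zero {s : ℂ} (hs : 0 < s.re) : GammaR s ≠ 0 := by
  refine mul_ne_zero ?_ (Gamma_ne_zero_of_re_pos (by simpa using hs))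
  simp [cpow_eq_zero_iff, Real.pi_ne_zero]

lemma betaIntegral_half {s t : ℂ} (hs : 0 < s.re) (ht : 0 < t.re) :
    betaIntegral (s / 2) (t / 2) = GammaR s * GammaR t / GammaR (s + t) := by
  have h := Gamma_mul_Gamma_eq_betaIntegral (s := s / 2) (t := t / 2)
    (by simpa using hs) (by simpa using ht)
  have hpi : (Real.pi : ℂ) ≠ 0 := ofReal_ne_zero.2 Real.pi_ne_zero
  rw [eq_div_iff (GammaR_ne_zero (by rw [add_re]; positivity))]
  simp only [GammaR]
  rw [neg_add, add_div, add_div, cpow_add _ _ hpi]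
  linear_combination (-(Real.pi : ℂ) ^ (-s / 2) * (Real.pi : ℂ) ^ (-t / 2)) * h

/-- **Barnes' first lemma** for `Γ_ℝ`. -/
lemma integral_GammaR_barnes {a b c d : ℂ}
    (ha : 0 < a.re) (hb : 0 < b.re) (hc : 0 < c.re) (hd : 0 < d.re) :
    ∫ t : ℝ, GammaR (a + t * I) * GammaR (b + t * I) * GammaR (c - t * I) * GammaR (d - t * I) =
      4 * Real.pi * (GammaR (a + c) * GammaR (a + d) * GammaR (b + c) * GammaR (b + d) /
        GammaR (a + b + c + d)) := by
  set G : ℝ → ℂ := fun t =>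
    GammaR (a + t * I) * GammaR (b + t * I) * GammaR (c - t * I) * GammaR (d - t * I) with hG
  have hscale : ∫ t, G t = 4 * Real.pi * ∫ ξ : ℝ, G (-(4 * Real.pi) * ξ) := by
    rw [Measure.integral_comp_mul_left, abs_inv, abs_neg, abs_of_pos (by positivity), real_smul]
    have : (Real.pi : ℂ) ≠ 0 := ofReal_ne_zero.2 Real.pi_ne_zero
    push_cast
    field_simp
  have hac : GammaR (a + c) ≠ 0 := GammaR_ne_zero (by rw [add_re]; positivity)
  have hbd : GammaR (b + d) ≠ 0 := GammaR_ne_zero (by rw [add_re]; positivity)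
  have hbeta (ξ : ℝ) : G (-(4 * Real.pi) * ξ) = GammaR (a + c) * GammaR (b + d) *
      (betaIntegral (a / 2 - 2 * Real.pi * ξ * I) (c / 2 + 2 * Real.pi * ξ * I) *
        betaIntegral (b / 2 - 2 * Real.pi * ξ * I) (d / 2 + 2 * Real.pi * ξ * I)) := by
    have e (s : ℂ) :
        s / 2 - 2 * Real.pi * ξ * I = (s + (-(4 * Real.pi) * ξ : ℝ) * I) / 2 := by
      push_cast; ring
    have e' (s : ℂ) :
        s / 2 + 2 * Real.pi * ξ * I = (s - (-(4 * Real.pi) * ξ : ℝ) * I) / 2 := by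
      push_cast; ring
    rw [e, e, e', e', betaIntegral_half (by simpa using ha) (by simpa using hc),
      betaIntegral_half (by simpa using hb) (by simpa using hd), add_add_sub_cancel,
      add_add_sub_cancel]
    simp only [hG]
    field_simp
  have half {s : ℂ} (hs : 0 < s.re) : 0 < (s / 2).re := by simpa using hs
  rw [hscale]
  simp only [hbeta]
  rw [integral_const_mul, integral_betaIntegral_mul_betaIntegral (half ha) (half hb) (half hc)
    (half hd), ← add_div, ← add_div, betaIntegral_half (by rw [add_re]; positivity)
    (by rw [add_re]; positivity), show a + d + (b + c) = a + b + c + d by ring]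
  ring

lemma VIntK_prod (k : ℕ) (F : ℕ → ℂ → ℂ) :
    VIntK k (fun _ => 0) (fun z => ∏ j ∈ Finset.Icc 1 k, F j (z (j - 1))) =
      I ^ k * ∏ j ∈ Finset.range k, ∫ t : ℝ, F (j + 1) (t * I) := by
  rw [VIntK, Finset.prod_range, ← integral_fintype_prod_volume_eq_prod]
  congr 2 with t
  rw [← Finset.Ico_add_one_right_eq_Icc, Finset.prod_Ico_eq_prod_range, add_tsub_cancel_right,
    Finset.prod_range]
  refine Finset.prod_congr rfl fun i _ => ?_
  simp [extR0, add_comm 1]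

/-- Interchanging `γ` and `δ` in the Barnes integral. -/
lemma integral_GammaR_barnes_swap {a b c d γ δ : ℂ} (hγ : 0 < γ.re) (hδ : 0 < δ.re)
    (ha : 0 < a.re) (hb : 0 < b.re) (hc : 0 ≤ c.re) (hd : 0 < d.re) :
    ∫ t : ℝ, GammaR (a + t * I) * GammaR (b + γ + t * I) * GammaR (c + δ - t * I) *
        GammaR (d - t * I) =
      GammaR (a + c + δ) / GammaR (a + c + γ) / (GammaR (b + d + δ) / GammaR (b + d + γ)) *
        ∫ t : ℝ, GammaR (a + t * I) * GammaR (b + δ + t * I) * GammaR (c + γ - t * I) *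
          GammaR (d - t * I) := by
  rw [integral_GammaR_barnes ha (by rw [add_re]; positivity) (by rw [add_re]; positivity) hd,
    integral_GammaR_barnes ha (by rw [add_re]; positivity) (by rw [add_re]; positivity) hd,
    show a + (b + γ) + (c + δ) + d = a + (b + δ) + (c + γ) + d by ring,
    show b + γ + (c + δ) = b + δ + (c + γ) by ring, ← add_assoc a c, ← add_assoc a c,
    add_right_comm b γ d, add_right_comm b δ d]
  have := GammaR_ne_zero (s := a + c + γ) (by simp only [add_re]; positivity)
  have := GammaR_ne_zero (s := b + d + δ) (by simp only [add_re]; positivity)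
  have := GammaR_ne_zero (s := b + d + γ) (by simp only [add_re]; positivity)
  field_simp

/-- Barnes-type lemma (Lemma 1.7(2) of Ishii–Stade). -/
theorem barnes_iterated_identity_two
    (n : ℕ) (hn : 2 ≤ n) (γ δ : ℂ) (c d : ℕ → ℂ)
    (hγ : 0 < γ.re) (hδ : 0 < δ.re)
    (hd0 : d 0 = 0)
    (hc : ∀ j, 1 ≤ j → j ≤ n → 0 < (c j).re)
    (hd : ∀ j, 1 ≤ j → j ≤ n - 1 → 0 < (d j).re) :
    ((4 * (Real.pi : ℂ) * Complex.I) ^ (n - 1))⁻¹ *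
      VIntK (n - 1) (fun _ => 0) (fun z =>
        ∏ j ∈ Finset.Icc 1 (n - 1),
          GammaR (c j + z (j - 1)) * GammaR (c (j + 1) + γ + z (j - 1)) *
            GammaR (d (j - 1) + δ - z (j - 1)) * GammaR (d j - z (j - 1))) =
    GammaR (c 1 + δ) * GammaR (c n + d (n - 1) + γ) /
        (GammaR (c 1 + γ) * GammaR (c n + d (n - 1) + δ)) *
      (((4 * (Real.pi : ℂ) * Complex.I) ^ (n - 1))⁻¹ *
        VIntK (n - 1) (fun _ => 0) (fun z =>
          ∏ j ∈ Finset.Icc 1 (n - 1),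
            GammaR (c j + z (j - 1)) * GammaR (c (j + 1) + δ + z (j - 1)) *
              GammaR (d (j - 1) + γ - z (j - 1)) * GammaR (d j - z (j - 1)))) := by
  obtain ⟨k, rfl⟩ : ∃ k, n = k + 1 := ⟨n - 1, by omega⟩
  simp only [add_tsub_cancel_right] at hd ⊢
  have hd' (j : ℕ) (hj : j ≤ k) : 0 ≤ (d j).re := by
    rcases Nat.eq_zero_or_pos j with rfl | h
    · simp [hd0]
    · exact (hd j h hj).le
  rw [VIntK_prod k (fun j z => GammaR (c j + z) * GammaR (c (j + 1) + γ + z) *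
      GammaR (d (j - 1) + δ - z) * GammaR (d j - z)),
    VIntK_prod k (fun j z => GammaR (c j + z) * GammaR (c (j + 1) + δ + z) *
      GammaR (d (j - 1) + γ - z) * GammaR (d j - z))]
  simp only [add_tsub_cancel_right]
  set R : ℕ → ℂ := fun j => GammaR (c (j + 1) + d j + δ) / GammaR (c (j + 1) + d j + γ) with hR
  have hR0 (j : ℕ) (hj : j ≤ k) : R j ≠ 0 := by
    have := hc (j + 1) (by omega) (by omega)
    have := hd' j hj
    exact div_ne_zero (GammaR_ne_zero (by simp only [add_re]; positivity))
      (GammaR_ne_zero (by simp only [add_re]; positivity))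
  have telescope (m : ℕ) (hm : m ≤ k) :
      ∏ j ∈ Finset.range m, (∫ t : ℝ, GammaR (c (j + 1) + t * I) *
        GammaR (c (j + 1 + 1) + γ + t * I) * GammaR (d j + δ - t * I) *
          GammaR (d (j + 1) - t * I)) =
      R 0 / R m * ∏ j ∈ Finset.range m, (∫ t : ℝ, GammaR (c (j + 1) + t * I) *
        GammaR (c (j + 1 + 1) + δ + t * I) * GammaR (d j + γ - t * I) *
          GammaR (d (j + 1) - t * I)) := by
    induction m with
    | zero => simp [hR0 0 (Nat.zero_le k)]
    | succ m ih =>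
      rw [Finset.prod_range_succ, Finset.prod_range_succ, ih (by omega),
        integral_GammaR_barnes_swap hγ hδ (hc _ (by omega) (by omega))
          (hc _ (by omega) (by omega)) (hd' m (by omega)) (hd _ (by omega) hm)]
      change _ * (R m / R (m + 1) * _) = _
      rw [mul_mul_mul_comm, div_mul_div_cancel₀ (hR0 m (by omega))]
  rw [telescope k le_rfl]
  simp only [hR, hd0, add_zero, zero_add, div_div_div_eq]
  ring

end
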